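/- arXiv:0712.1014 — 4 statements merged into one kernel-verified Lean document; each statement's English description precedes it below -/
import Mathlib

section
/- For every finite simple graph G one has α(G) ≤ β(G), α(G) ≥ λ(G) − α(G), and λ(G) − α(G) ≥ 4(β(G) − α(G)); consequently 4·β(G) ≤ 5·α(G), i.e., β(G)/α(G) ≤ 5/4. -/
open SimpleGraph

/-- A matching of `G`, given as a finite set of edges of `G` that are pairwise non-adjacent. -/
def IsMatchingE {V : Type*} (G : SimpleGraph V) (M : Finset (Sym2 V)) : Prop :=
  ↑M ⊆ G.edgeSet ∧ ∀ e ∈ M, ∀ f ∈ M, e ≠ f → ∀ v : V, ¬(v ∈ e ∧ v ∈ f)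

/-- A vertex is covered by a set of edges if some edge of it is incident to the vertex. -/
def Covers {V : Type*} (M : Finset (Sym2 V)) (v : V) : Prop := ∃ e ∈ M, v ∈ e

/-- `β(G)`: the maximum size of a matching of `G`. -/
noncomputable def gBeta {V : Type*} (G : SimpleGraph V) : ℕ :=
  sSup {n | ∃ M : Finset (Sym2 V), IsMatchingE G M ∧ M.card = n}

/-- `λ(G)`: the maximum of `|H| + |H'|` over pairs `(H, H')` of disjoint matchings of `G`. -/
noncomputable def gLam {V : Type*} (G : SimpleGraph V) : ℕ :=
  sSup {n | ∃ H H' : Finset (Sym2 V), IsMatchingE G H ∧ IsMatchingE G H' ∧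
    Disjoint H H' ∧ H.card + H'.card = n}

/-- `α(G)`: the maximum of `|H|` over pairs `(H, H')` of disjoint matchings of `G`
with `|H| + |H'| = λ(G)`. -/
noncomputable def gAlpha {V : Type*} (G : SimpleGraph V) : ℕ :=
  sSup {n | ∃ H H' : Finset (Sym2 V), IsMatchingE G H ∧ IsMatchingE G H' ∧
    Disjoint H H' ∧ H.card + H'.card = gLam G ∧ H.card = n}

/-- `β₁(G)`: the maximum of `β(G \ F)` over maximum matchings `F` of `G`. -/
noncomputable def gBeta1 {V : Type*} (G : SimpleGraph V) : ℕ :=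
  sSup {n | ∃ F : Finset (Sym2 V), IsMatchingE G F ∧ F.card = gBeta G ∧
    gBeta (G.deleteEdges ↑F) = n}

/-- Membership in `M₂(G)`: `(H, H')` is a pair of disjoint matchings of `G` with
`|H| + |H'| = λ(G)` and `|H| = α(G)`. -/
def InM2 {V : Type*} (G : SimpleGraph V) (H H' : Finset (Sym2 V)) : Prop :=
  IsMatchingE G H ∧ IsMatchingE G H' ∧ Disjoint H H' ∧
  H.card + H'.card = gLam G ∧ H.card = gAlpha G

/-- Membership in `M₂(G, M)`: pairs from `M₂(G)` maximizing `|M ∩ (H ∪ H')|`. -/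
def InM2M {V : Type*} [DecidableEq V] (G : SimpleGraph V) (M H H' : Finset (Sym2 V)) : Prop :=
  InM2 G H H' ∧ ∀ K K' : Finset (Sym2 V), InM2 G K K' →
    (M ∩ (K ∪ K')).card ≤ (M ∩ (H ∪ H')).card

/-- The degree of a vertex `v` in the graph `F`. -/
noncomputable def fdeg {V : Type*} (F : SimpleGraph V) (v : V) : ℕ := (F.neighborSet v).ncard

/-- The spanner: two paths `a₁a₂a₃a₄a₅` and `b₁b₂b₃b₄b₅` joined by the edge `a₃b₃`.
Vertices `0..4` are `a₁..a₅` and `5..9` are `b₁..b₅`. -/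
def Spanner10 : SimpleGraph (Fin 10) :=
  SimpleGraph.fromEdgeSet
    {s(0, 1), s(1, 2), s(2, 3), s(3, 4), s(5, 6), s(6, 7), s(7, 8), s(8, 9), s(2, 7)}

/-- An S-forest: every connected component is isomorphic to the spanner. -/
def IsSForest {V : Type*} (F : SimpleGraph V) : Prop :=
  ∀ c : F.ConnectedComponent, Nonempty ((F.induce c.supp) ≃g Spanner10)

/-- `U(F)`: edges of `F` incident to a vertex of degree 1. -/
def USet {V : Type*} (F : SimpleGraph V) : Set (Sym2 V) :=
  {e | e ∈ F.edgeSet ∧ ∃ v ∈ e, fdeg F v = 1}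

/-- `L(F)`: edges of `F` not in `U(F)` incident to a vertex of degree 2. -/
def LSet {V : Type*} (F : SimpleGraph V) : Set (Sym2 V) :=
  {e | e ∈ F.edgeSet ∧ e ∉ USet F ∧ ∃ v ∈ e, fdeg F v = 2}

/-- `w` is the base of the 1-vertex `u` of `F`: a 3-vertex at `F`-distance 2 from `u`. -/
def IsBase {V : Type*} (F : SimpleGraph V) (u w : V) : Prop :=
  fdeg F w = 3 ∧ F.dist u w = 2

/-- `Δ(G, F)`: edges of `G` joining a 1-vertex of `F` to its base. -/
def DeltaSet {V : Type*} (G F : SimpleGraph V) : Set (Sym2 V) :=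
  {e | e ∈ G.edgeSet ∧ ∃ u w : V, e = s(u, w) ∧ fdeg F u = 1 ∧ IsBase F u w}

/-- `B(G, F) = E(G) \ (U(F) ∪ L(F) ∪ Δ(G, F))`. -/
def BSet {V : Type*} (G F : SimpleGraph V) : Set (Sym2 V) :=
  G.edgeSet \ (USet F ∪ LSet F ∪ DeltaSet G F)

/-- Condition (a): no 1-vertex of `F` is incident to an edge from `B(G, F)`. -/
def CondA {V : Type*} (G F : SimpleGraph V) : Prop :=
  ∀ v : V, fdeg F v = 1 → ∀ e ∈ BSet G F, v ∉ e

/-- Condition (b): if a 1-vertex `u` of `F` is incident to an edge from `Δ(G, F)`, then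
the 2-vertex of `F` adjacent to `u` in `F` is not incident to any edge from `B(G, F)`. -/
def CondB {V : Type*} (G F : SimpleGraph V) : Prop :=
  ∀ u v : V, fdeg F u = 1 → (∃ e ∈ DeltaSet G F, u ∈ e) →
    F.Adj u v → fdeg F v = 2 → ∀ e ∈ BSet G F, v ∉ e

/-- Condition (c): for every `L(F)`-`B(G, F)` alternating even closed trail of `G`
containing an edge joining two 2-vertices of `F`, the graph formed by its edges belonging
to `B(G, F)` is not bipartite (2-colorable). -/
def CondC {V : Type*} (G F : SimpleGraph V) : Prop :=
  ∀ (n : ℕ) (e : ℕ → Sym2 V),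
    1 ≤ n →
    (∀ i j, i < 2 * n → j < 2 * n → e i = e j → i = j) →
    (∀ i, i < 2 * n → e i ∈ G.edgeSet) →
    (∀ i, i + 1 < 2 * n → ∃ v : V, v ∈ e i ∧ v ∈ e (i + 1)) →
    (∃ v : V, v ∈ e (2 * n - 1) ∧ v ∈ e 0) →
    (∀ i, i < 2 * n → (i % 2 = 0 → e i ∈ LSet F) ∧ (i % 2 = 1 → e i ∈ BSet G F)) →
    (∃ i, i < 2 * n ∧ ∀ v ∈ e i, fdeg F v = 2) →
    ¬ (SimpleGraph.fromEdgeSet {f | ∃ i, i < 2 * n ∧ f = e i ∧ f ∈ BSet G F}).Colorable 2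

/-!
Fix a matching `M` and a pair `(H, H') ∈ M₂(G, M)`. Let `A` be the set of vertices covered by `M`
but not by `H`, and `B` the set of those covered by `H` but not by `M`, so that
`|A| - |B| = 2 (|M| - |H|)`. If the edge of `M` at `v ∈ A` were not in `H'`, adding it to `H` in
place of the edge of `H` at its other end would increase `|M ∩ (H ∪ H')|`; so it lies in `H'`.
Following it and then an edge of `H` leads from `v` to a vertex `φ v`, and `φ` is injective because
`H` and `H'` are matchings. An edge of `H'` joining two vertices of `A ∪ φ(A)` would complete an
`H`-`H'` alternating path all of whose vertices are covered by `H'`, but whose ends are not covered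
by `H`; exchanging `H` and `H'` along this path would enlarge `H`. Hence at most `|H'|` of the
`2 |A|` vertices of `A ∪ φ(A)` are covered by `H'`. The others lie in `B`, so
`4 (|M| - |H|) = 2 |A| - 2 |B| ≤ |H'|`, and it remains to take `M` maximum.
-/

section Matching

variable {V : Type*} {G : SimpleGraph V} {M N : Finset (Sym2 V)} {a b v : V}

theorem IsMatchingE.eq_of_mem_of_mem (hN : IsMatchingE G N) {e f : Sym2 V} (he : e ∈ N)
    (hf : f ∈ N) (hve : v ∈ e) (hvf : v ∈ f) : e = f := by
  by_contra hef
  exact hN.2 e he f hf hef v ⟨hve, hvf⟩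

theorem isMatchingE_empty (G : SimpleGraph V) : IsMatchingE G ∅ :=
  ⟨by simp, by simp⟩

theorem IsMatchingE.subset (hN : IsMatchingE G N) (hMN : M ⊆ N) : IsMatchingE G M :=
  ⟨fun _ he ↦ hN.1 (hMN he), fun e he f hf ↦ hN.2 e (hMN he) f (hMN hf)⟩

theorem IsMatchingE.union [DecidableEq V] (hM : IsMatchingE G M) (hN : IsMatchingE G N)
    (hMN : ∀ v, Covers M v → ¬Covers N v) : IsMatchingE G (M ∪ N) := by
  refine ⟨by simpa using ⟨hM.1, hN.1⟩, fun e he f hf hef v ⟨hve, hvf⟩ ↦ ?_⟩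
  rcases Finset.mem_union.1 he with he | he <;> rcases Finset.mem_union.1 hf with hf | hf
  · exact hM.2 e he f hf hef v ⟨hve, hvf⟩
  · exact hMN v ⟨e, he, hve⟩ ⟨f, hf, hvf⟩
  · exact hMN v ⟨f, hf, hvf⟩ ⟨e, he, hve⟩
  · exact hN.2 e he f hf hef v ⟨hve, hvf⟩

theorem isMatchingE_singleton (hab : G.Adj a b) : IsMatchingE G {s(a, b)} :=
  ⟨by simpa using hab, by simp_all⟩

end Matching

section Mate

variable {V : Type*} {G : SimpleGraph V} {N : Finset (Sym2 V)} {v w : V}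

theorem covers_iff_exists_mk_mem : Covers N v ↔ ∃ w, s(v, w) ∈ N := by
  constructor
  · rintro ⟨_, he, w, rfl⟩
    exact ⟨w, he⟩
  · rintro ⟨w, hw⟩
    exact ⟨_, hw, Sym2.mem_mk_left v w⟩

open Classical in
/-- The partner of the vertex `v` in the matching `N`: the other end of the edge of `N` at `v`.
A vertex which is not covered is its own partner, so that `mate N` is an involution of `V`. -/
noncomputable def mate (N : Finset (Sym2 V)) (v : V) : V :=
  if h : ∃ w, s(v, w) ∈ N then h.choose else v

theorem mk_mate_mem (hv : Covers N v) : s(v, mate N v) ∈ N := by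
  have h := covers_iff_exists_mk_mem.1 hv
  rw [mate, dif_pos h]
  exact h.choose_spec

theorem mate_of_not_covers (hv : ¬Covers N v) : mate N v = v :=
  dif_neg (covers_iff_exists_mk_mem.not.1 hv)

theorem Covers.covers_mate (hv : Covers N v) : Covers N (mate N v) :=
  ⟨_, mk_mate_mem hv, Sym2.mem_mk_right _ _⟩

theorem IsMatchingE.mate_eq (hN : IsMatchingE G N) (hvw : s(v, w) ∈ N) : mate N v = w :=
  have hv : Covers N v := covers_iff_exists_mk_mem.2 ⟨w, hvw⟩
  Sym2.congr_right.1 <|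
    hN.eq_of_mem_of_mem (mk_mate_mem hv) hvw (Sym2.mem_mk_left _ _) (Sym2.mem_mk_left _ _)

theorem IsMatchingE.mate_involutive (hN : IsMatchingE G N) : Function.Involutive (mate N) := by
  intro v
  by_cases hv : Covers N v
  · exact hN.mate_eq (Sym2.eq_swap ▸ mk_mate_mem hv)
  · rw [mate_of_not_covers hv, mate_of_not_covers hv]

theorem IsMatchingE.mem_of_mapsTo_mate (hN : IsMatchingE G N) {S : Set V}
    (hS : Set.MapsTo (mate N) S S) {e : Sym2 V} (he : e ∈ N) (hve : v ∈ e) (hwe : w ∈ e)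
    (hv : v ∈ S) : w ∈ S := by
  obtain ⟨x, rfl⟩ := hve
  rcases Sym2.mem_iff.1 hwe with rfl | rfl
  · exact hv
  · exact hN.mate_eq he ▸ hS hv

theorem card_le_card_of_mate_notMem {T : Finset V} (hT : ∀ v ∈ T, Covers N v)
    (hmate : ∀ v ∈ T, mate N v ∉ T) : T.card ≤ N.card := by
  refine Finset.card_le_card_of_injOn (fun v ↦ s(v, mate N v))
    (fun v hv ↦ mk_mate_mem (hT v hv)) ?_
  intro v hv w hw hvw
  rcases Sym2.eq_iff.1 hvw with ⟨h, -⟩ | ⟨h, -⟩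
  · exact h
  · exact absurd (h ▸ hv) (hmate w hw)

end Mate

section CoveredVerts

variable {V : Type*} [DecidableEq V] {G : SimpleGraph V} {N : Finset (Sym2 V)} {v : V}

/-- The finite set of vertices covered by `N`, for counting the vertices satisfying `Covers N`. -/
def coveredVerts (N : Finset (Sym2 V)) : Finset V :=
  N.biUnion Sym2.toFinset

theorem mem_coveredVerts : v ∈ coveredVerts N ↔ Covers N v := by
  simp [coveredVerts, Covers]

theorem IsMatchingE.card_coveredVerts (hN : IsMatchingE G N) :
    (coveredVerts N).card = 2 * N.card := by
  rw [coveredVerts, Finset.card_biUnion, Finset.sum_const_nat (m := 2), mul_comm]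
  · intro e he
    exact Sym2.card_toFinset_of_not_isDiag e (G.not_isDiag_of_mem_edgeSet (hN.1 he))
  · intro e he f hf hef
    refine Finset.disjoint_left.2 fun v hve hvf ↦ hN.2 e he f hf hef v ?_
    exact ⟨Sym2.mem_toFinset.1 hve, Sym2.mem_toFinset.1 hvf⟩

end CoveredVerts

section Reroute

variable {V : Type*} [DecidableEq V] {G : SimpleGraph V} {M N N' : Finset (Sym2 V)} {a b : V}

/-- The edge set obtained from `N` by adding the edge `ab` and deleting the edges at `b`. If `N` is
a matching which does not cover `a`, this is again a matching, and no smaller than `N`. -/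
def reroute (N : Finset (Sym2 V)) (a b : V) : Finset (Sym2 V) :=
  {e ∈ N | b ∉ e} ∪ {s(a, b)}

theorem IsMatchingE.isMatchingE_reroute (hN : IsMatchingE G N) (ha : ¬Covers N a)
    (hab : G.Adj a b) : IsMatchingE G (reroute N a b) := by
  refine (hN.subset (Finset.filter_subset _ _)).union (isMatchingE_singleton hab) ?_
  rintro v ⟨e, he, hve⟩ ⟨f, hf, hvf⟩
  obtain ⟨heN, hbe⟩ := Finset.mem_filter.1 he
  rw [Finset.mem_singleton.1 hf] at hvf
  rcases Sym2.mem_iff.1 hvf with rfl | rfl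
  · exact ha ⟨e, heN, hve⟩
  · exact hbe hve

theorem IsMatchingE.card_le_card_reroute (hN : IsMatchingE G N) (ha : ¬Covers N a) :
    N.card ≤ (reroute N a b).card := by
  have hab : s(a, b) ∉ N := fun h ↦ ha ⟨_, h, Sym2.mem_mk_left a b⟩
  have hb : {e ∈ N | b ∈ e}.card ≤ 1 := Finset.card_le_one.2 fun e he f hf ↦ by
    rw [Finset.mem_filter] at he hf
    exact hN.eq_of_mem_of_mem he.1 hf.1 he.2 hf.2
  have hsplit := Finset.card_filter_add_card_filter_not (s := N) (fun e ↦ b ∈ e)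
  have hcard : (reroute N a b).card = {e ∈ N | b ∉ e}.card + 1 :=
    Finset.card_union_of_disjoint (by simp [hab])
  omega

theorem disjoint_reroute (hNN' : Disjoint N N') (hab : s(a, b) ∉ N') :
    Disjoint (reroute N a b) N' :=
  Finset.disjoint_union_left.2
    ⟨hNN'.mono_left (Finset.filter_subset _ _), Finset.disjoint_singleton_left.2 hab⟩

theorem IsMatchingE.card_inter_lt_card_inter_reroute (hM : IsMatchingE G M) (hab : s(a, b) ∈ M)
    (hN : s(a, b) ∉ N) (hN' : s(a, b) ∉ N') :
    (M ∩ (N ∪ N')).card < (M ∩ (reroute N a b ∪ N')).card := by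
  have hbe : ∀ e ∈ M, b ∈ e → e = s(a, b) := fun e he hbe ↦
    hM.eq_of_mem_of_mem he hab hbe (Sym2.mem_mk_right a b)
  have hsub : M ∩ (N ∪ N') ⊆ M ∩ (reroute N a b ∪ N') := by
    intro e he
    simp only [reroute, Finset.mem_inter, Finset.mem_union, Finset.mem_filter,
      Finset.mem_singleton] at he ⊢
    grind
  refine Finset.card_lt_card ((Finset.ssubset_iff_of_subset hsub).2 ⟨s(a, b), ?_, ?_⟩)
  · simp [reroute, hab]
  · simp [hN, hN']

end Reroute

section ExchangeOn

variable {V : Type*} [DecidableEq V] {G : SimpleGraph V} {H H' N : Finset (Sym2 V)} {S : Finset V}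

/-- The edges of `N` with at least one end in `S`. -/
def edgesMeeting (N : Finset (Sym2 V)) (S : Finset V) : Finset (Sym2 V) :=
  {e ∈ N | ∃ v ∈ S, v ∈ e}

/-- The edge set obtained from `H` by replacing its edges meeting `S` by those of `H'`. If `S` is a
union of components of `H ∪ H'`, this exchanges the colours of a Kempe chain. -/
def exchangeOn (S : Finset V) (H H' : Finset (Sym2 V)) : Finset (Sym2 V) :=
  (H \ edgesMeeting H S) ∪ edgesMeeting H' S

theorem edgesMeeting_subset : edgesMeeting N S ⊆ N :=
  Finset.filter_subset _ _

theorem IsMatchingE.coveredVerts_edgesMeeting (hN : IsMatchingE G N)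
    (hS : Set.MapsTo (mate N) S S) :
    coveredVerts (edgesMeeting N S) = S ∩ coveredVerts N := by
  ext v
  simp only [mem_coveredVerts, Finset.mem_inter, edgesMeeting, Covers, Finset.mem_filter]
  constructor
  · rintro ⟨e, ⟨he, w, hw, hwe⟩, hve⟩
    exact ⟨hN.mem_of_mapsTo_mate hS he hwe hve hw, e, he, hve⟩
  · rintro ⟨hv, e, he, hve⟩
    exact ⟨e, ⟨he, v, hv, hve⟩, hve⟩

theorem IsMatchingE.isMatchingE_exchangeOn (hH : IsMatchingE G H) (hH' : IsMatchingE G H')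
    (hS : Set.MapsTo (mate H') S S) : IsMatchingE G (exchangeOn S H H') := by
  refine (hH.subset Finset.sdiff_subset).union (hH'.subset edgesMeeting_subset) ?_
  rintro v ⟨e, he, hve⟩ hv
  obtain ⟨heH, heS⟩ := Finset.mem_sdiff.1 he
  rw [← mem_coveredVerts, hH'.coveredVerts_edgesMeeting hS] at hv
  exact heS (Finset.mem_filter.2 ⟨heH, v, (Finset.mem_inter.1 hv).1, hve⟩)

theorem card_exchangeOn (hHH' : Disjoint H H') :
    (exchangeOn S H H').card + (edgesMeeting H S).card
      = H.card + (edgesMeeting H' S).card := by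
  have hdisj : Disjoint (H \ edgesMeeting H S) (edgesMeeting H' S) :=
    hHH'.mono Finset.sdiff_subset edgesMeeting_subset
  rw [exchangeOn, Finset.card_union_of_disjoint hdisj, add_right_comm,
    Finset.card_sdiff_add_card_eq_card edgesMeeting_subset]

theorem disjoint_exchangeOn (hHH' : Disjoint H H') :
    Disjoint (exchangeOn S H H') (exchangeOn S H' H) := by
  rw [Finset.disjoint_left] at hHH' ⊢
  simp only [exchangeOn, edgesMeeting, Finset.mem_union, Finset.mem_sdiff, Finset.mem_filter]
  grind

end ExchangeOn

section Extremal

variable {V : Type*} {G : SimpleGraph V} {H H' K K' M : Finset (Sym2 V)}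

/-- The matching number of `G` is finite. Otherwise the suprema defining `gBeta`, `gLam` and
`gAlpha` take the junk value `0`. -/
def HasBoundedMatchings (G : SimpleGraph V) : Prop :=
  BddAbove {n | ∃ M : Finset (Sym2 V), IsMatchingE G M ∧ M.card = n}

theorem hasBoundedMatchings_of_finite [Finite V] (G : SimpleGraph V) : HasBoundedMatchings G := by
  refine (Set.finite_range (Finset.card (α := Sym2 V))).bddAbove.mono ?_
  rintro _ ⟨M, -, rfl⟩
  exact ⟨M, rfl⟩

theorem HasBoundedMatchings.card_le_gBeta (hG : HasBoundedMatchings G) (hM : IsMatchingE G M) :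
    M.card ≤ gBeta G :=
  le_csSup hG ⟨M, hM, rfl⟩

theorem HasBoundedMatchings.exists_card_eq_gBeta (hG : HasBoundedMatchings G) :
    ∃ M : Finset (Sym2 V), IsMatchingE G M ∧ M.card = gBeta G :=
  Nat.sSup_mem (s := {n | ∃ M : Finset (Sym2 V), IsMatchingE G M ∧ M.card = n})
    ⟨0, ∅, isMatchingE_empty G, rfl⟩ hG

theorem HasBoundedMatchings.bddAbove_gLam (hG : HasBoundedMatchings G) :
    BddAbove {n | ∃ H H' : Finset (Sym2 V), IsMatchingE G H ∧ IsMatchingE G H' ∧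
      Disjoint H H' ∧ H.card + H'.card = n} := by
  refine ⟨gBeta G + gBeta G, ?_⟩
  rintro _ ⟨H, H', hH, hH', -, rfl⟩
  exact add_le_add (hG.card_le_gBeta hH) (hG.card_le_gBeta hH')

theorem HasBoundedMatchings.bddAbove_gAlpha (hG : HasBoundedMatchings G) :
    BddAbove {n | ∃ H H' : Finset (Sym2 V), IsMatchingE G H ∧ IsMatchingE G H' ∧
      Disjoint H H' ∧ H.card + H'.card = gLam G ∧ H.card = n} := by
  refine ⟨gBeta G, ?_⟩
  rintro _ ⟨H, -, hH, -, -, -, rfl⟩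
  exact hG.card_le_gBeta hH

theorem HasBoundedMatchings.exists_inM2 (hG : HasBoundedMatchings G) :
    ∃ H H' : Finset (Sym2 V), InM2 G H H' := by
  obtain ⟨L, L', hL, hL', hLL', hcard⟩ := Nat.sSup_mem
    (s := {n | ∃ H H' : Finset (Sym2 V), IsMatchingE G H ∧ IsMatchingE G H' ∧
      Disjoint H H' ∧ H.card + H'.card = n})
    ⟨0, ∅, ∅, isMatchingE_empty G, isMatchingE_empty G, disjoint_bot_left, rfl⟩ hG.bddAbove_gLam
  exact Nat.sSup_mem
    (s := {n | ∃ H H' : Finset (Sym2 V), IsMatchingE G H ∧ IsMatchingE G H' ∧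
      Disjoint H H' ∧ H.card + H'.card = gLam G ∧ H.card = n})
    ⟨L.card, L, L', hL, hL', hLL', hcard, rfl⟩ hG.bddAbove_gAlpha

theorem HasBoundedMatchings.exists_inM2M [DecidableEq V] (hG : HasBoundedMatchings G)
    (M : Finset (Sym2 V)) : ∃ H H' : Finset (Sym2 V), InM2M G M H H' := by
  let overlaps : Set ℕ := {n | ∃ H H' : Finset (Sym2 V), InM2 G H H' ∧ (M ∩ (H ∪ H')).card = n}
  have hne : overlaps.Nonempty := by
    obtain ⟨H, H', h⟩ := hG.exists_inM2
    exact ⟨_, H, H', h, rfl⟩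
  have hbdd : BddAbove overlaps := by
    refine ⟨M.card, ?_⟩
    rintro _ ⟨H, H', -, rfl⟩
    exact Finset.card_le_card Finset.inter_subset_left
  obtain ⟨H, H', h, hmax⟩ := Nat.sSup_mem hne hbdd
  exact ⟨H, H', h, fun K K' hK ↦ hmax ▸ le_csSup hbdd ⟨K, K', hK, rfl⟩⟩

theorem InM2.card_add_card_le (h : InM2 G H H') (hG : HasBoundedMatchings G)
    (hK : IsMatchingE G K) (hK' : IsMatchingE G K') (hKK' : Disjoint K K') :
    K.card + K'.card ≤ H.card + H'.card :=
  h.2.2.2.1 ▸ le_csSup hG.bddAbove_gLam ⟨K, K', hK, hK', hKK', rfl⟩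

theorem InM2.card_le_of_card_add_card_eq (h : InM2 G H H') (hG : HasBoundedMatchings G)
    (hK : IsMatchingE G K) (hK' : IsMatchingE G K') (hKK' : Disjoint K K')
    (hcard : K.card + K'.card = H.card + H'.card) : K.card ≤ H.card :=
  h.2.2.2.2 ▸ le_csSup hG.bddAbove_gAlpha ⟨K, K', hK, hK', hKK', hcard.trans h.2.2.2.1, rfl⟩

theorem InM2.card_snd_le_card_fst (h : InM2 G H H') (hG : HasBoundedMatchings G) :
    H'.card ≤ H.card :=
  h.card_le_of_card_add_card_eq hG h.2.1 h.1 h.2.2.1.symm (add_comm _ _)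

theorem InM2.card_inter_coveredVerts_le [DecidableEq V] (h : InM2 G H H')
    (hG : HasBoundedMatchings G) {S : Finset V} (hS : Set.MapsTo (mate H) S S)
    (hS' : Set.MapsTo (mate H') S S) :
    (S ∩ coveredVerts H').card ≤ (S ∩ coveredVerts H).card := by
  have ⟨hH, hH', hHH', _⟩ := h
  have hK := card_exchangeOn (S := S) hHH'
  have hK' := card_exchangeOn (S := S) hHH'.symm
  have hle := h.card_le_of_card_add_card_eq hG (hH.isMatchingE_exchangeOn hH' hS')
    (hH'.isMatchingE_exchangeOn hH hS) (disjoint_exchangeOn hHH') (by omega)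
  rw [← hH.coveredVerts_edgesMeeting hS, ← hH'.coveredVerts_edgesMeeting hS',
    (hH.subset edgesMeeting_subset).card_coveredVerts,
    (hH'.subset edgesMeeting_subset).card_coveredVerts]
  omega

theorem InM2.covers_fst_of_forall_covers_snd (h : InM2 G H H') (hG : HasBoundedMatchings G)
    {S : Finset V} (hS : Set.MapsTo (mate H) S S) (hS' : Set.MapsTo (mate H') S S)
    (hcov : ∀ v ∈ S, Covers H' v) : ∀ v ∈ S, Covers H v := by
  classical
  have hS_inter : S ∩ coveredVerts H' = S :=
    Finset.inter_eq_left.2 fun v hv ↦ mem_coveredVerts.2 (hcov v hv)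
  have hle := h.card_inter_coveredVerts_le hG hS hS'
  rw [hS_inter] at hle
  have hsub : S ⊆ coveredVerts H :=
    Finset.inter_eq_left.1 (Finset.eq_of_subset_of_card_le Finset.inter_subset_left hle)
  exact fun v hv ↦ mem_coveredVerts.1 (hsub hv)

end Extremal

section AlternatingPaths

variable {V : Type*} {G : SimpleGraph V} {H H' : Finset (Sym2 V)} {v w : V}

/-- The vertex reached from `v` along its edge in `H'` followed by an edge in `H`: the injection `φ`
of the proof. A step along a missing edge stays in place. -/
noncomputable def twoStep (H H' : Finset (Sym2 V)) (v : V) : V :=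
  mate H (mate H' v)

theorem IsMatchingE.twoStep_injective (hH : IsMatchingE G H) (hH' : IsMatchingE G H') :
    Function.Injective (twoStep H H') :=
  hH.mate_involutive.injective.comp hH'.mate_involutive.injective

theorem IsMatchingE.mate_twoStep (hH : IsMatchingE G H) (v : V) :
    mate H (twoStep H H' v) = mate H' v :=
  hH.mate_involutive _

theorem InM2.covers_fst_mate_snd (h : InM2 G H H') (hG : HasBoundedMatchings G)
    (hv : ¬Covers H v) (hv' : Covers H' v) : Covers H (mate H' v) := by
  classical
  by_contra hend
  refine hv (h.covers_fst_of_forall_covers_snd hG (S := {v, mate H' v}) ?_ ?_ ?_ v (by simp))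
  · simp [Set.MapsTo, mate_of_not_covers hv, mate_of_not_covers hend]
  · simp [Set.MapsTo, h.2.1.mate_involutive v]
  · simp [hv', hv'.covers_mate]

theorem InM2.covers_fst_twoStep (h : InM2 G H H') (hG : HasBoundedMatchings G)
    (hv : ¬Covers H v) (hv' : Covers H' v) : Covers H (twoStep H H' v) :=
  (h.covers_fst_mate_snd hG hv hv').covers_mate

theorem InM2.covers_fst_mate_snd_twoStep (h : InM2 G H H') (hG : HasBoundedMatchings G)
    (hv : ¬Covers H v) (hv' : Covers H' v) (hcov : Covers H' (twoStep H H' v)) :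
    Covers H (mate H' (twoStep H H' v)) := by
  classical
  have hstep (x : V) : mate H (mate H' x) = twoStep H H' x := rfl
  by_contra hend
  refine hv (h.covers_fst_of_forall_covers_snd hG
    (S := {v, mate H' v, twoStep H H' v, mate H' (twoStep H H' v)}) ?_ ?_ ?_ v (by simp))
  · simp [Set.MapsTo, mate_of_not_covers hv, mate_of_not_covers hend, h.1.mate_twoStep, hstep v]
  · simp [Set.MapsTo, h.2.1.mate_involutive _]
  · simp [hv', hv'.covers_mate, hcov, hcov.covers_mate]

theorem InM2.mate_snd_twoStep_ne_twoStep (h : InM2 G H H') (hG : HasBoundedMatchings G)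
    (hv : ¬Covers H v) (hv' : Covers H' v) (hw : ¬Covers H w) (hw' : Covers H' w)
    (hcov : Covers H' (twoStep H H' v)) :
    mate H' (twoStep H H' v) ≠ twoStep H H' w := by
  classical
  have hstep (x : V) : mate H (mate H' x) = twoStep H H' x := rfl
  intro hmeet
  have hmeet' : mate H' (twoStep H H' w) = twoStep H H' v := by
    rw [← hmeet, h.2.1.mate_involutive]
  refine hv (h.covers_fst_of_forall_covers_snd hG
    (S := {v, mate H' v, twoStep H H' v, w, mate H' w, twoStep H H' w}) ?_ ?_ ?_ v (by simp))
  · simp [Set.MapsTo, mate_of_not_covers hv, mate_of_not_covers hw, h.1.mate_twoStep, hstep v,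
      hstep w]
  · simp [Set.MapsTo, h.2.1.mate_involutive _, hmeet, hmeet']
  · simp [hv', hv'.covers_mate, hw', hw'.covers_mate, hcov, hmeet ▸ hcov.covers_mate]

variable [DecidableEq V] {A : Finset V}

theorem InM2.card_union_image_twoStep (h : InM2 G H H') (hG : HasBoundedMatchings G)
    (hA : ∀ v ∈ A, ¬Covers H v) (hA' : ∀ v ∈ A, Covers H' v) :
    (A ∪ A.image (twoStep H H')).card = 2 * A.card := by
  have hdisj : Disjoint A (A.image (twoStep H H')) := by
    refine Finset.disjoint_right.2 (Finset.forall_mem_image.2 fun v hv hmem ↦ ?_)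
    exact hA _ hmem (h.covers_fst_twoStep hG (hA v hv) (hA' v hv))
  rw [Finset.card_union_of_disjoint hdisj,
    Finset.card_image_of_injective _ (h.1.twoStep_injective h.2.1), two_mul]

theorem InM2.mate_snd_notMem_union_image_twoStep (h : InM2 G H H') (hG : HasBoundedMatchings G)
    (hA : ∀ v ∈ A, ¬Covers H v) (hA' : ∀ v ∈ A, Covers H' v)
    (hv : v ∈ A ∪ A.image (twoStep H H')) (hcov : Covers H' v) :
    mate H' v ∉ A ∪ A.image (twoStep H H') := by
  have hinv := h.2.1.mate_involutive
  intro hmem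
  rcases Finset.mem_union.1 hv with hv | hv <;> rcases Finset.mem_union.1 hmem with hm | hm
  · exact hA _ hm (h.covers_fst_mate_snd hG (hA v hv) (hA' v hv))
  · obtain ⟨w, hw, hwv⟩ := Finset.mem_image.1 hm
    have hend := h.covers_fst_mate_snd_twoStep hG (hA w hw) (hA' w hw) (hwv ▸ hcov.covers_mate)
    rw [hwv, hinv] at hend
    exact hA v hv hend
  · obtain ⟨w, hw, rfl⟩ := Finset.mem_image.1 hv
    exact hA _ hm (h.covers_fst_mate_snd_twoStep hG (hA w hw) (hA' w hw) hcov)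
  · obtain ⟨w, hw, rfl⟩ := Finset.mem_image.1 hv
    obtain ⟨x, hx, hxw⟩ := Finset.mem_image.1 hm
    exact h.mate_snd_twoStep_ne_twoStep hG (hA w hw) (hA' w hw) (hA x hx) (hA' x hx) hcov hxw.symm

theorem InM2.card_union_image_twoStep_inter_le (h : InM2 G H H') (hG : HasBoundedMatchings G)
    (hA : ∀ v ∈ A, ¬Covers H v) (hA' : ∀ v ∈ A, Covers H' v) :
    ((A ∪ A.image (twoStep H H')) ∩ coveredVerts H').card ≤ H'.card := by
  have hcov : ∀ v ∈ (A ∪ A.image (twoStep H H')) ∩ coveredVerts H', Covers H' v :=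
    fun v hv ↦ mem_coveredVerts.1 (Finset.mem_inter.1 hv).2
  refine card_le_card_of_mate_notMem hcov fun v hv hmate ↦ ?_
  exact h.mate_snd_notMem_union_image_twoStep hG hA hA' (Finset.mem_inter.1 hv).1 (hcov v hv)
    (Finset.mem_inter.1 hmate).1

end AlternatingPaths

section Counting

variable {V : Type*} [DecidableEq V] {G : SimpleGraph V} {H H' K K' M : Finset (Sym2 V)} {v w : V}

theorem InM2M.card_inter_union_le (h : InM2M G M H H') (hG : HasBoundedMatchings G)
    (hK : IsMatchingE G K) (hK' : IsMatchingE G K') (hKK' : Disjoint K K')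
    (hHK : H.card ≤ K.card) (hHK' : H'.card ≤ K'.card) :
    (M ∩ (K ∪ K')).card ≤ (M ∩ (H ∪ H')).card := by
  obtain ⟨-, -, -, hlam, halpha⟩ := h.1
  have hsum := h.1.card_add_card_le hG hK hK' hKK'
  exact h.2 K K' ⟨hK, hK', hKK', by omega, by omega⟩

theorem InM2M.mem_snd_of_not_covers_fst (h : InM2M G M H H') (hG : HasBoundedMatchings G)
    (hM : IsMatchingE G M) (hvw : s(v, w) ∈ M) (hv : ¬Covers H v) : s(v, w) ∈ H' := by
  by_contra hvw'
  obtain ⟨hH, hH', hHH', -⟩ := h.1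
  have hlt := hM.card_inter_lt_card_inter_reroute (N := H) hvw
    (fun hmem ↦ hv ⟨_, hmem, Sym2.mem_mk_left v w⟩) hvw'
  exact hlt.not_ge <| h.card_inter_union_le hG (hH.isMatchingE_reroute hv (hM.1 hvw)) hH'
    (disjoint_reroute hHH' hvw') (hH.card_le_card_reroute hv) le_rfl

theorem InM2M.mem_fst_of_not_covers_snd (h : InM2M G M H H') (hG : HasBoundedMatchings G)
    (hM : IsMatchingE G M) (hvw : s(v, w) ∈ M) (hv : ¬Covers H' v) : s(v, w) ∈ H := by
  by_contra hvw'
  obtain ⟨hH, hH', hHH', -⟩ := h.1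
  have hlt := hM.card_inter_lt_card_inter_reroute (N := H') hvw
    (fun hmem ↦ hv ⟨_, hmem, Sym2.mem_mk_left v w⟩) hvw'
  rw [Finset.union_comm, Finset.union_comm (reroute H' v w)] at hlt
  exact hlt.not_ge <| h.card_inter_union_le hG hH (hH'.isMatchingE_reroute hv (hM.1 hvw))
    (disjoint_reroute hHH'.symm hvw').symm le_rfl (hH'.card_le_card_reroute hv)

theorem InM2M.covers_snd (h : InM2M G M H H') (hG : HasBoundedMatchings G) (hM : IsMatchingE G M)
    (hvM : Covers M v) (hv : ¬Covers H v) : Covers H' v :=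
  ⟨_, h.mem_snd_of_not_covers_fst hG hM (mk_mate_mem hvM) hv, Sym2.mem_mk_left _ _⟩

theorem InM2M.not_covers_twoStep (h : InM2M G M H H') (hG : HasBoundedMatchings G)
    (hM : IsMatchingE G M) (hvM : Covers M v) (hv : ¬Covers H v)
    (hcov : ¬Covers H' (twoStep H H' v)) : ¬Covers M (twoStep H H' v) := by
  intro hcovM
  have hstart : mate H' v = mate M v :=
    h.1.2.1.mate_eq (h.mem_snd_of_not_covers_fst hG hM (mk_mate_mem hvM) hv)
  have hend : mate H (twoStep H H' v) = mate M (twoStep H H' v) :=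
    h.1.1.mate_eq (h.mem_fst_of_not_covers_snd hG hM (mk_mate_mem hcovM) hcov)
  have hfix : twoStep H H' v = v := hM.mate_involutive.injective <| by
    rw [← hend, h.1.1.mate_twoStep, hstart]
  rw [hfix] at hcov
  exact hcov (h.covers_snd hG hM hvM hv)

theorem InM2M.two_mul_card_sdiff_le (h : InM2M G M H H') (hG : HasBoundedMatchings G)
    (hM : IsMatchingE G M) :
    2 * (coveredVerts M \ coveredVerts H).card
      ≤ H'.card + (coveredVerts H \ coveredVerts M).card := by
  set A := coveredVerts M \ coveredVerts H
  set W := A ∪ A.image (twoStep H H')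
  have hAM : ∀ v ∈ A, Covers M v := fun v hv ↦ mem_coveredVerts.1 (Finset.mem_sdiff.1 hv).1
  have hAH : ∀ v ∈ A, ¬Covers H v := fun v hv ↦ mem_coveredVerts.not.1 (Finset.mem_sdiff.1 hv).2
  have hAH' : ∀ v ∈ A, Covers H' v := fun v hv ↦ h.covers_snd hG hM (hAM v hv) (hAH v hv)
  have huncovered : W \ coveredVerts H' ⊆ coveredVerts H \ coveredVerts M := by
    intro v hv
    obtain ⟨hvW, hvH'⟩ := Finset.mem_sdiff.1 hv
    simp only [Finset.mem_sdiff, mem_coveredVerts] at hvH' ⊢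
    rcases Finset.mem_union.1 hvW with hvA | hvA
    · exact absurd (hAH' v hvA) hvH'
    · obtain ⟨w, hw, rfl⟩ := Finset.mem_image.1 hvA
      exact ⟨h.1.covers_fst_twoStep hG (hAH w hw) (hAH' w hw),
        h.not_covers_twoStep hG hM (hAM w hw) (hAH w hw) hvH'⟩
  calc 2 * A.card = W.card := (h.1.card_union_image_twoStep hG hAH hAH').symm
    _ = (W ∩ coveredVerts H').card + (W \ coveredVerts H').card :=
      (Finset.card_inter_add_card_sdiff W _).symm
    _ ≤ H'.card + (coveredVerts H \ coveredVerts M).card :=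
      add_le_add (h.1.card_union_image_twoStep_inter_le hG hAH hAH')
        (Finset.card_le_card huncovered)

theorem InM2M.four_mul_card_le (h : InM2M G M H H') (hG : HasBoundedMatchings G)
    (hM : IsMatchingE G M) : 4 * M.card ≤ 4 * H.card + H'.card := by
  have hsdiff := h.two_mul_card_sdiff_le hG hM
  have hcomm := Finset.card_sdiff_add_card (coveredVerts M) (coveredVerts H)
  rw [Finset.union_comm, ← Finset.card_sdiff_add_card, hM.card_coveredVerts,
    h.1.1.card_coveredVerts] at hcomm
  omega

end Counting

theorem stmt0_general {V : Type*} (G : SimpleGraph V) (hG : HasBoundedMatchings G) :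
    gAlpha G ≤ gBeta G ∧
    gLam G - gAlpha G ≤ gAlpha G ∧
    4 * (gBeta G - gAlpha G) ≤ gLam G - gAlpha G ∧
    4 * gBeta G ≤ 5 * gAlpha G := by
  classical
  obtain ⟨M, hM, hbeta⟩ := hG.exists_card_eq_gBeta
  obtain ⟨H, H', h⟩ := hG.exists_inM2M M
  obtain ⟨hH, -, -, hlam, halpha⟩ := h.1
  have hHbeta : H.card ≤ gBeta G := hG.card_le_gBeta hH
  have hH'H : H'.card ≤ H.card := h.1.card_snd_le_card_fst hG
  have hmain : 4 * M.card ≤ 4 * H.card + H'.card := h.four_mul_card_le hG hM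
  refine ⟨?_, ?_, ?_, ?_⟩ <;> omega

/-- For every finite simple graph `G`: `α(G) ≤ β(G)`,
`α(G) ≥ λ(G) − α(G)`, `λ(G) − α(G) ≥ 4(β(G) − α(G))`, hence `4β(G) ≤ 5α(G)`. -/
theorem stmt0 {V : Type*} [Fintype V] [DecidableEq V] (G : SimpleGraph V) :
    gAlpha G ≤ gBeta G ∧
    gLam G - gAlpha G ≤ gAlpha G ∧
    4 * (gBeta G - gAlpha G) ≤ gLam G - gAlpha G ∧
    4 * gBeta G ≤ 5 * gAlpha G := by
  exact stmt0_general G (hasBoundedMatchings_of_finite G)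
end

section
/- Let G be a finite simple graph every connected component of which is a path or a cycle of even length (equivalently, G is bipartite and has maximum degree at most 2). Then for every pair (H, H') ∈ M₂(G) one has H ∪ H' = E(G). -/
open SimpleGraph

/-!
Any two disjoint matchings satisfy `|H| + |H'| ≤ |E(G)|`, so it suffices that `E(G)` is itself the
union of two disjoint matchings: then `λ(G) = |E(G)|`, and a pair attaining `λ(G)` exhausts `E(G)`.

This is the case `k = 2` of Kőnig's edge-colouring theorem (`exists_isMatchingE_partition`): a
bipartite graph with degrees at most `k` decomposes into `k` matchings. By induction it is enough
to find a matching that covers every vertex of degree `k`. The matrix `A / k + (1 - D / k)`, where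
`A` is the adjacency matrix and `D` the diagonal of degrees, is doubly stochastic, so by Birkhoff's
theorem some permutation `σ` is supported on its positive entries; it moves every vertex of degree
`k` along an edge. The edges `v — σ v` with `v` in one colour class form the matching.
-/

section Degree

variable {V : Type*} {G G' : SimpleGraph V} {v : V}

lemma finite_support_of_finite_edgeSet (hfin : G.edgeSet.Finite) : G.support.Finite := by
  have hsub : G.support ⊆ ⋃ e ∈ G.edgeSet, (e : Set V) := by
    rintro v ⟨w, hvw⟩
    exact Set.mem_biUnion (G.mem_edgeSet.2 hvw) (Sym2.mem_mk_left v w)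
  refine (hfin.biUnion fun e _ => ?_).subset hsub
  induction e with
  | h x y => exact Sym2.coe_mk ▸ Set.toFinite {x, y}

lemma finite_neighborSet_of_finite_edgeSet (hfin : G.edgeSet.Finite) (v : V) :
    (G.neighborSet v).Finite :=
  (finite_support_of_finite_edgeSet hfin).subset (G.neighborSet_subset_support v)

lemma fdeg_eq_degree [Fintype (G.neighborSet v)] : fdeg G v = G.degree v :=
  Set.ncard_eq_toFinset_card' (G.neighborSet v)

lemma fdeg_mono (hfin : (G'.neighborSet v).Finite) (hle : G ≤ G') : fdeg G v ≤ fdeg G' v :=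
  Set.ncard_le_ncard (fun _ hw => hle hw) hfin

lemma fdeg_deleteEdges_lt {M : Finset (Sym2 V)} (hfin : (G.neighborSet v).Finite)
    (hM : ↑M ⊆ G.edgeSet) (hv : Covers M v) : fdeg (G.deleteEdges ↑M) v < fdeg G v := by
  obtain ⟨_, he, w, rfl⟩ := hv
  refine Set.ncard_lt_ncard (Set.ssubset_iff_exists.2 ⟨?_, w, hM he, ?_⟩) hfin
  · exact fun _ hw => G.deleteEdges_le _ hw
  · simp [deleteEdges_adj, he]

lemma fdeg_deleteEdges_le_of_covers {M : Finset (Sym2 V)} {k : ℕ}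
    (hfin : (G.neighborSet v).Finite) (hM : ↑M ⊆ G.edgeSet) (hdeg : fdeg G v ≤ k + 1)
    (hcov : fdeg G v = k + 1 → Covers M v) : fdeg (G.deleteEdges ↑M) v ≤ k := by
  rcases hdeg.lt_or_eq with hlt | heq
  · exact (fdeg_mono hfin (G.deleteEdges_le _)).trans (Nat.le_of_lt_succ hlt)
  · exact Nat.le_of_lt_succ ((fdeg_deleteEdges_lt hfin hM (hcov heq)).trans_eq heq)

lemma edgeSet_eq_empty_of_fdeg_eq_zero (hfin : ∀ v, (G.neighborSet v).Finite)
    (hdeg : ∀ v, fdeg G v = 0) : G.edgeSet = ∅ := by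
  refine Set.eq_empty_of_forall_notMem (Sym2.ind fun v w hvw => ?_)
  have hempty : G.neighborSet v = ∅ := (Set.ncard_eq_zero (hfin v)).1 (hdeg v)
  exact Set.eq_empty_iff_forall_notMem.1 hempty w hvw

lemma fdeg_induce_support (v : G.support) : fdeg (G.induce G.support) v = fdeg G v := by
  have hrange : G.neighborSet v ⊆ Set.range ((↑) : G.support → V) := by
    rintro w hw
    exact ⟨⟨w, v, hw.symm⟩, rfl⟩
  exact Set.ncard_preimage_of_injective_subset_range Subtype.val_injective hrange

end Degree

section Permutation

lemma exists_perm_forall_pos_of_mem_doublyStochastic {R n : Type*} [Field R] [LinearOrder R]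
    [IsStrictOrderedRing R] [Fintype n] [DecidableEq n] {M : Matrix n n R}
    (hM : M ∈ doublyStochastic R n) : ∃ σ : Equiv.Perm n, ∀ i, 0 < M i (σ i) := by
  obtain ⟨w, hw_nonneg, hw_sum, rfl⟩ := exists_eq_sum_perm_of_mem_doublyStochastic hM
  obtain ⟨σ, -, hσ⟩ : ∃ σ ∈ Finset.univ, 0 < w σ :=
    Finset.exists_lt_of_sum_lt (by rw [hw_sum, Finset.sum_const_zero]; exact one_pos)
  refine ⟨σ, fun i => ?_⟩
  have hentry (τ : Equiv.Perm n) :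
      (w τ • τ.permMatrix R) i (σ i) = if τ i = σ i then w τ else 0 := by
    simp [Equiv.Perm.permMatrix, PEquiv.toMatrix_apply]
  rw [Matrix.sum_apply]
  refine Finset.sum_pos' (fun τ _ => ?_) ⟨σ, Finset.mem_univ σ, ?_⟩
  · rw [hentry]
    split_ifs
    exacts [hw_nonneg τ, le_rfl]
  · rwa [hentry, if_pos rfl]

variable {V : Type*} {G : SimpleGraph V} {k : ℕ}

/-- The transition matrix of the lazy random walk on `G` that follows each edge with probability
`1 / k` and otherwise stays put. It is meant for `k` bounding the degrees: then it is doubly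
stochastic, and a positive diagonal entry marks a vertex of degree less than `k`. -/
def lazyWalkMatrix [DecidableEq V] [Fintype V] (G : SimpleGraph V) [DecidableRel G.Adj] (k : ℕ) :
    Matrix V V ℚ :=
  (k : ℚ)⁻¹ • G.adjMatrix ℚ + Matrix.diagonal fun v => 1 - (k : ℚ)⁻¹ * G.degree v

lemma lazyWalkMatrix_mem_doublyStochastic [DecidableEq V] [Fintype V] [DecidableRel G.Adj]
    (hdeg : ∀ v, G.degree v ≤ k) : lazyWalkMatrix G k ∈ doublyStochastic ℚ V := by
  have hsymm : (lazyWalkMatrix G k).IsSymm :=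
    (G.isSymm_adjMatrix.smul _).add (Matrix.isSymm_diagonal _)
  have hrow : (lazyWalkMatrix G k).mulVec 1 = 1 := by
    ext v
    simp [lazyWalkMatrix, Matrix.add_mulVec, Matrix.smul_mulVec, Matrix.mulVec_diagonal]
  refine mem_doublyStochastic.2 ⟨fun v w => ?_, hrow, ?_⟩
  · have hprob : (k : ℚ)⁻¹ * G.degree v ≤ 1 :=
      inv_mul_le_one_of_le₀ (by exact_mod_cast hdeg v) (by positivity)
    refine add_nonneg ?_ ?_
    · simp only [Matrix.smul_apply, adjMatrix_apply, smul_eq_mul]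
      split_ifs <;> positivity
    · rw [Matrix.diagonal_apply]
      split_ifs
      exacts [sub_nonneg.2 hprob, le_rfl]
  · rw [← Matrix.mulVec_transpose, hsymm.eq, hrow]

lemma adj_or_eq_of_lazyWalkMatrix_pos [DecidableEq V] [Fintype V] [DecidableRel G.Adj] {v w : V}
    (hk : k ≠ 0) (hpos : 0 < lazyWalkMatrix G k v w) :
    G.Adj v w ∨ w = v ∧ G.degree v < k := by
  refine or_iff_not_imp_left.2 fun hadj => ?_
  simp only [lazyWalkMatrix, Matrix.add_apply, Matrix.smul_apply, adjMatrix_apply, if_neg hadj,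
    smul_zero, zero_add, Matrix.diagonal_apply] at hpos
  split_ifs at hpos with hvw
  · rw [sub_pos, inv_mul_lt_one₀ (by positivity)] at hpos
    exact ⟨hvw.symm, by exact_mod_cast hpos⟩
  · exact absurd hpos (lt_irrefl 0)

lemma exists_perm_forall_adj_or_degree_lt [Fintype V] [DecidableRel G.Adj] (hk : k ≠ 0)
    (hdeg : ∀ v, G.degree v ≤ k) :
    ∃ σ : Equiv.Perm V, ∀ v, G.Adj v (σ v) ∨ σ v = v ∧ G.degree v < k := by
  classical
  obtain ⟨σ, hσ⟩ := exists_perm_forall_pos_of_mem_doublyStochastic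
    (lazyWalkMatrix_mem_doublyStochastic hdeg)
  exact ⟨σ, fun v => adj_or_eq_of_lazyWalkMatrix_pos hk (hσ v)⟩

lemma exists_perm_forall_adj_or_fdeg_lt (hfin : G.edgeSet.Finite) (hk : k ≠ 0)
    (hdeg : ∀ v, fdeg G v ≤ k) :
    ∃ σ : Equiv.Perm V, ∀ v, G.Adj v (σ v) ∨ σ v = v ∧ fdeg G v < k := by
  classical
  have := (finite_support_of_finite_edgeSet hfin).fintype
  have hdegree (v : G.support) : (G.induce G.support).degree v = fdeg G v := by
    rw [← fdeg_eq_degree, fdeg_induce_support]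
  obtain ⟨σ, hσ⟩ := exists_perm_forall_adj_or_degree_lt (G := G.induce G.support) hk
    fun v => (hdegree v).trans_le (hdeg v)
  refine ⟨Equiv.Perm.ofSubtype σ, fun v => ?_⟩
  by_cases hv : v ∈ G.support
  · rw [Equiv.Perm.ofSubtype_apply_of_mem σ hv, ← hdegree ⟨v, hv⟩]
    exact (hσ ⟨v, hv⟩).imp_right (And.imp_left (congrArg Subtype.val))
  · have hisolated : G.neighborSet v = ∅ :=
      Set.eq_empty_of_forall_notMem fun w hw => hv ⟨w, hw⟩
    rw [fdeg, hisolated, Set.ncard_empty]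
    exact Or.inr ⟨Equiv.Perm.ofSubtype_apply_of_not_mem σ hv, hk.pos⟩

end Permutation

section Matching

variable {V : Type*} {G G' : SimpleGraph V} {k : ℕ}

lemma IsMatchingE.mono {M : Finset (Sym2 V)} (hM : IsMatchingE G M) (hle : G ≤ G') :
    IsMatchingE G' M :=
  ⟨hM.1.trans (edgeSet_mono hle), hM.2⟩

lemma isMatchingE_of_isIndepSet_of_injOn {M : Finset (Sym2 V)} {s : Set V} {f : V → V}
    (hs : G.IsIndepSet s) (hf : Set.InjOn f s)
    (hM : ∀ e ∈ M, ∃ v ∈ s, G.Adj v (f v) ∧ s(v, f v) = e) : IsMatchingE G M := by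
  have hnot_mem {v : V} (hv : v ∈ s) (hadj : G.Adj v (f v)) : f v ∉ s :=
    fun hfv => hs hv hfv hadj.ne hadj
  refine ⟨fun e he => ?_, fun e he e' he' hne x hx => hne ?_⟩
  · obtain ⟨v, -, hadj, rfl⟩ := hM e he
    exact hadj
  · obtain ⟨a, ha, ha_adj, rfl⟩ := hM e he
    obtain ⟨b, hb, hb_adj, rfl⟩ := hM e' he'
    obtain ⟨hxa, hxb⟩ := hx
    suffices a = b by rw [this]
    rcases Sym2.mem_iff.1 hxa with rfl | rfl <;> rcases Sym2.mem_iff.1 hxb with hab | hab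
    · exact hab
    · exact absurd (hab ▸ ha) (hnot_mem hb hb_adj)
    · exact absurd (hab ▸ hb) (hnot_mem ha ha_adj)
    · exact hf ha hb hab

lemma exists_isMatchingE_forall_covers (hfin : G.edgeSet.Finite) (hbip : G.Colorable 2)
    (hk : k ≠ 0) (hdeg : ∀ v, fdeg G v ≤ k) :
    ∃ M, IsMatchingE G M ∧ ∀ v, fdeg G v = k → Covers M v := by
  classical
  obtain ⟨c⟩ := hbip
  obtain ⟨σ, hσ⟩ := exists_perm_forall_adj_or_fdeg_lt hfin hk hdeg
  let M := hfin.toFinset.filter fun e => ∃ v ∈ c.colorClass 0, G.Adj v (σ v) ∧ s(v, σ v) = e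
  have hmem {v : V} (hv : c v = 0) (hadj : G.Adj v (σ v)) : s(v, σ v) ∈ M :=
    Finset.mem_filter.2 ⟨hfin.mem_toFinset.2 hadj, v, hv, hadj, rfl⟩
  refine ⟨M, isMatchingE_of_isIndepSet_of_injOn (c.isIndepSet_colorClass 0) σ.injective.injOn
    fun e he => (Finset.mem_filter.1 he).2, fun v hv => ?_⟩
  by_cases hcv : c v = 0
  · have hadj : G.Adj v (σ v) := (hσ v).resolve_right fun hfix => hv.not_lt hfix.2
    exact ⟨_, hmem hcv hadj, Sym2.mem_mk_left _ _⟩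
  · obtain ⟨u, rfl⟩ := σ.surjective v
    have hadj : G.Adj u (σ u) :=
      (hσ u).resolve_right fun hfix => hv.not_lt (hfix.1.symm ▸ hfix.2)
    have hcu : c u = 0 := by
      have := c.valid hadj
      omega
    exact ⟨_, hmem hcu hadj, Sym2.mem_mk_right _ _⟩

theorem exists_isMatchingE_partition (hfin : G.edgeSet.Finite) (hbip : G.Colorable 2)
    (hdeg : ∀ v, fdeg G v ≤ k) :
    ∃ M : Fin k → Finset (Sym2 V), (∀ i, IsMatchingE G (M i)) ∧
      Pairwise (fun i j => Disjoint (M i) (M j)) ∧ ⋃ i, ↑(M i) = G.edgeSet := by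
  induction k generalizing G with
  | zero =>
    have hempty : G.edgeSet = ∅ :=
      edgeSet_eq_empty_of_fdeg_eq_zero (finite_neighborSet_of_finite_edgeSet hfin)
        fun v => Nat.le_zero.1 (hdeg v)
    exact ⟨Fin.elim0, fun i => i.elim0, fun i => i.elim0, by simp [hempty]⟩
  | succ k ih =>
    obtain ⟨N, hN, hcov⟩ := exists_isMatchingE_forall_covers hfin hbip k.succ_ne_zero hdeg
    have hle : G.deleteEdges ↑N ≤ G := G.deleteEdges_le _
    have hdeg_del (v : V) : fdeg (G.deleteEdges ↑N) v ≤ k :=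
      fdeg_deleteEdges_le_of_covers (finite_neighborSet_of_finite_edgeSet hfin v) hN.1 (hdeg v)
        (hcov v)
    obtain ⟨M, hM, hdisj, hunion⟩ :=
      ih (hfin.subset (edgeSet_mono hle)) (hbip.mono_left hle) hdeg_del
    rw [edgeSet_deleteEdges] at hunion
    have hdisj_left (i : Fin k) : Disjoint N (M i) := by
      have hsub : (M i : Set (Sym2 V)) ⊆ G.edgeSet \ ↑N :=
        hunion ▸ Set.subset_iUnion (fun j => (M j : Set (Sym2 V))) i
      exact Finset.disjoint_coe.1 (Set.disjoint_sdiff_right.mono_right hsub)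
    refine ⟨Fin.cons N M, Fin.cases hN fun i => (hM i).mono hle, ?_, ?_⟩
    · exact pairwise_fin_succ_iff.2 ⟨fun i => (hdisj_left i).symm, hdisj_left, hdisj⟩
    · rw [← Set.union_sdiff_cancel hN.1, ← hunion]
      ext e
      simp [Fin.exists_fin_succ]

end Matching

section MaxDisjointMatchings

variable {V : Type*} {G : SimpleGraph V} {H H' : Finset (Sym2 V)}

lemma IsMatchingE.card_add_card_le_ncard_edgeSet (hfin : G.edgeSet.Finite) (hH : IsMatchingE G H)
    (hH' : IsMatchingE G H') (hdisj : Disjoint H H') : H.card + H'.card ≤ G.edgeSet.ncard := by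
  classical
  rw [← Finset.card_union_of_disjoint hdisj, ← Set.ncard_coe_finset, Finset.coe_union]
  exact Set.ncard_le_ncard (Set.union_subset hH.1 hH'.1) hfin

lemma IsMatchingE.card_add_card_le_gLam (hfin : G.edgeSet.Finite) (hH : IsMatchingE G H)
    (hH' : IsMatchingE G H') (hdisj : Disjoint H H') : H.card + H'.card ≤ gLam G := by
  refine le_csSup ⟨G.edgeSet.ncard, ?_⟩ ⟨H, H', hH, hH', hdisj, rfl⟩
  rintro _ ⟨K, K', hK, hK', hKK', rfl⟩
  exact hK.card_add_card_le_ncard_edgeSet hfin hK' hKK'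

lemma ncard_edgeSet_le_gLam (hfin : G.edgeSet.Finite) (hbip : G.Colorable 2)
    (hdeg : ∀ v, fdeg G v ≤ 2) : G.edgeSet.ncard ≤ gLam G := by
  obtain ⟨M, hM, hdisj, hunion⟩ := exists_isMatchingE_partition hfin hbip hdeg
  calc G.edgeSet.ncard = (⋃ i, (M i : Set (Sym2 V))).ncard := by rw [hunion]
    _ ≤ ∑ i, (M i : Set (Sym2 V)).ncard := Set.ncard_iUnion_le_of_fintype _
    _ = (M 0).card + (M 1).card := by simp only [Set.ncard_coe_finset, Fin.sum_univ_two]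
    _ ≤ gLam G := (hM 0).card_add_card_le_gLam hfin (hM 1) (hdisj zero_ne_one)

theorem stmt2_general (hfin : G.edgeSet.Finite) (hbip : G.Colorable 2)
    (hdeg : ∀ v, fdeg G v ≤ 2) (hH : IsMatchingE G H) (hH' : IsMatchingE G H')
    (hdisj : Disjoint H H') (hcard : H.card + H'.card = gLam G) :
    (↑H ∪ ↑H' : Set (Sym2 V)) = G.edgeSet := by
  classical
  refine Set.eq_of_subset_of_ncard_le (Set.union_subset hH.1 hH'.1) ?_ hfin
  rw [← Finset.coe_union, Set.ncard_coe_finset, Finset.card_union_of_disjoint hdisj, hcard]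
  exact ncard_edgeSet_le_gLam hfin hbip hdeg

end MaxDisjointMatchings

/-- if every connected component of `G` is a path or an even cycle
(equivalently, `G` is bipartite with maximum degree at most 2), then for every
`(H, H') ∈ M₂(G)` one has `H ∪ H' = E(G)`. -/
theorem stmt2 {V : Type*} [Fintype V] [DecidableEq V] (G : SimpleGraph V)
    (hbip : G.Colorable 2) (hdeg : ∀ v : V, fdeg G v ≤ 2)
    (H H' : Finset (Sym2 V)) (h : InM2 G H H') :
    (↑H ∪ ↑H' : Set (Sym2 V)) = G.edgeSet := by
  obtain ⟨hH, hH', hdisj, hcard, -⟩ := h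
  exact stmt2_general G.edgeSet.toFinite hbip hdeg hH hH' hdisj hcard
end

section
/- For the spanner S one has β(S) = 5, λ(S) = 8, and α(S) = λ(S) − α(S) = 4; in particular β(S)/α(S) = 5/4. -/
open SimpleGraph

/-
Two matchings together use at most two of the edges at a vertex, so a disjoint pair `(H, H')` misses
an edge at `a₃` and an edge at `b₃`, both of which have degree 3. Hence `|H| + |H'| ≤ 9 - 1`, and
equality forces the two missed edges to coincide, that is, to be the edge `a₃b₃`. The other eight
edges are covered by the four vertices `a₂, a₄, b₂, b₄`, so then `|H| ≤ 4`; adding `a₃` gives a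
vertex cover of the whole spanner, so that no matching exceeds 5 edges.
-/

namespace IsMatchingE

variable {V : Type*} {G : SimpleGraph V} {M H H' : Finset (Sym2 V)} {u v : V}

instance [Fintype V] [DecidableEq V] [DecidableRel G.Adj] : Decidable (IsMatchingE G M) :=
  decidable_of_iff ((∀ e ∈ M, e ∈ G.edgeSet) ∧
    ∀ e ∈ M, ∀ f ∈ M, e ≠ f → ∀ v : V, ¬(v ∈ e ∧ v ∈ f)) Iff.rfl

lemma eq_of_mem_of_mem_s7 (hM : IsMatchingE G M) {e f : Sym2 V} (he : e ∈ M) (hf : f ∈ M)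
    (hve : v ∈ e) (hvf : v ∈ f) : e = f :=
  by_contra fun hef => hM.2 e he f hf hef v ⟨hve, hvf⟩

lemma card_le_card_of_cover (hM : IsMatchingE G M) {C : Finset V}
    (hC : ∀ e ∈ M, ∃ v ∈ C, v ∈ e) : M.card ≤ C.card :=
  Finset.card_le_card_of_forall_subsingleton (fun e v => v ∈ e) hC
    fun _ _ _ he _ hf => hM.eq_of_mem_of_mem_s7 he.1 hf.1 he.2 hf.2

lemma subset_edgeFinset [Fintype G.edgeSet] (hM : IsMatchingE G M) : M ⊆ G.edgeFinset :=
  fun _ he => mem_edgeFinset.2 (hM.1 he)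

variable [DecidableEq V]

lemma card_filter_mem_le_one (hM : IsMatchingE G M) (v : V) : (M.filter (v ∈ ·)).card ≤ 1 :=
  Finset.card_le_one.2 fun _ he _ hf =>
    have ⟨he, hve⟩ := Finset.mem_filter.1 he
    have ⟨hf, hvf⟩ := Finset.mem_filter.1 hf
    hM.eq_of_mem_of_mem_s7 he hf hve hvf

lemma card_filter_mem_union_le_two (hH : IsMatchingE G H) (hH' : IsMatchingE G H') (v : V) :
    ((H ∪ H').filter (v ∈ ·)).card ≤ 2 := by
  rw [Finset.filter_union]
  exact (Finset.card_union_le _ _).trans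
    (add_le_add (hH.card_filter_mem_le_one v) (hH'.card_filter_mem_le_one v))

lemma exists_mem_incidenceSet_notMem_union [Fintype (G.neighborSet v)] (hH : IsMatchingE G H)
    (hH' : IsMatchingE G H') (hv : 2 < G.degree v) : ∃ e ∈ G.incidenceSet v, e ∉ H ∪ H' := by
  by_contra! hall
  have hsub : G.incidenceFinset v ⊆ (H ∪ H').filter (v ∈ ·) := fun e he =>
    have he := (G.mem_incidenceFinset v e).1 he
    Finset.mem_filter.2 ⟨hall e he, he.2⟩
  refine hv.not_ge ?_
  calc G.degree v = (G.incidenceFinset v).card := (G.card_incidenceFinset_eq_degree v).symm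
    _ ≤ ((H ∪ H').filter (v ∈ ·)).card := Finset.card_le_card hsub
    _ ≤ 2 := hH.card_filter_mem_union_le_two hH' v

variable [Fintype G.edgeSet]

lemma card_union_lt_card_edgeFinset [Fintype (G.neighborSet v)] (hH : IsMatchingE G H)
    (hH' : IsMatchingE G H') (hv : 2 < G.degree v) : (H ∪ H').card < G.edgeFinset.card := by
  obtain ⟨e, he, hmem⟩ := hH.exists_mem_incidenceSet_notMem_union hH' hv
  exact Finset.card_lt_card <| Finset.ssubset_iff_of_subset
    (Finset.union_subset hH.subset_edgeFinset hH'.subset_edgeFinset) |>.2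
    ⟨e, mem_edgeFinset.2 he.1, hmem⟩

lemma notMem_union_of_card_edgeFinset_le [Fintype (G.neighborSet u)] [Fintype (G.neighborSet v)]
    (hH : IsMatchingE G H) (hH' : IsMatchingE G H') (huv : u ≠ v) (hu : 2 < G.degree u)
    (hv : 2 < G.degree v) (hcard : G.edgeFinset.card ≤ (H ∪ H').card + 1) :
    s(u, v) ∉ H ∪ H' := by
  obtain ⟨e, he, hemem⟩ := hH.exists_mem_incidenceSet_notMem_union hH' hu
  obtain ⟨f, hf, hfmem⟩ := hH.exists_mem_incidenceSet_notMem_union hH' hv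
  have hsub : H ∪ H' ⊆ G.edgeFinset :=
    Finset.union_subset hH.subset_edgeFinset hH'.subset_edgeFinset
  have hmissed : (G.edgeFinset \ (H ∪ H')).card ≤ 1 := by
    rw [Finset.card_sdiff_of_subset hsub]
    lia
  have hef : e = f := Finset.card_le_one.1 hmissed
    e (Finset.mem_sdiff.2 ⟨mem_edgeFinset.2 he.1, hemem⟩)
    f (Finset.mem_sdiff.2 ⟨mem_edgeFinset.2 hf.1, hfmem⟩)
  have heuv : e = s(u, v) := (Sym2.mem_and_mem_iff huv).1 ⟨he.2, hef ▸ hf.2⟩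
  exact heuv ▸ hemem

end IsMatchingE

namespace Spanner10

instance : DecidableRel Spanner10.Adj :=
  inferInstanceAs (DecidableRel (fromEdgeSet _).Adj)

lemma card_edgeFinset : Spanner10.edgeFinset.card = 9 := by decide

lemma two_lt_degree_two : 2 < Spanner10.degree 2 := by decide

lemma two_lt_degree_seven : 2 < Spanner10.degree 7 := by decide

lemma exists_mem_cover_of_ne {e : Sym2 (Fin 10)} (he : e ∈ Spanner10.edgeSet) (hne : e ≠ s(2, 7)) :
    ∃ v ∈ ({1, 3, 6, 8} : Finset (Fin 10)), v ∈ e := by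
  revert e
  decide

/-- The edges `a₁a₂, a₃a₄, b₁b₂, b₃b₄`: every second edge of the two paths, starting at the first.
With `evenEdges` it forms a pair of disjoint matchings attaining `λ`. -/
def oddEdges : Finset (Sym2 (Fin 10)) := {s(0, 1), s(2, 3), s(5, 6), s(7, 8)}

/-- The edges `a₂a₃, a₄a₅, b₂b₃, b₄b₅` of the two paths left over by `oddEdges`. -/
def evenEdges : Finset (Sym2 (Fin 10)) := {s(1, 2), s(3, 4), s(6, 7), s(8, 9)}

/-- The perfect matching of the spanner: the four end edges of the paths and the edge `a₃b₃`. -/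
def perfectMatching : Finset (Sym2 (Fin 10)) := {s(0, 1), s(3, 4), s(5, 6), s(8, 9), s(2, 7)}

lemma isMatchingE_oddEdges : IsMatchingE Spanner10 oddEdges := by decide

lemma isMatchingE_evenEdges : IsMatchingE Spanner10 evenEdges := by decide

lemma isMatchingE_perfectMatching : IsMatchingE Spanner10 perfectMatching := by decide

lemma disjoint_oddEdges_evenEdges : Disjoint oddEdges evenEdges := by decide

variable {M H H' : Finset (Sym2 (Fin 10))}

lemma card_le_five_of_isMatchingE (hM : IsMatchingE Spanner10 M) : M.card ≤ 5 :=
  hM.card_le_card_of_cover (C := {2, 1, 3, 6, 8}) fun e he => by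
    by_cases hmid : e = s(2, 7)
    · exact ⟨2, by simp [hmid]⟩
    · obtain ⟨v, hv, hve⟩ := exists_mem_cover_of_ne (hM.1 he) hmid
      exact ⟨v, Finset.mem_insert_of_mem hv, hve⟩

lemma card_add_card_le_eight (hH : IsMatchingE Spanner10 H) (hH' : IsMatchingE Spanner10 H')
    (hdisj : Disjoint H H') : H.card + H'.card ≤ 8 := by
  have hlt := hH.card_union_lt_card_edgeFinset hH' two_lt_degree_two
  rw [Finset.card_union_of_disjoint hdisj, card_edgeFinset] at hlt
  exact Nat.le_of_lt_succ hlt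

lemma card_le_four_of_card_add_card_eq_eight (hH : IsMatchingE Spanner10 H)
    (hH' : IsMatchingE Spanner10 H') (hdisj : Disjoint H H') (hcard : H.card + H'.card = 8) :
    H.card ≤ 4 := by
  have hmid : s(2, 7) ∉ H ∪ H' := by
    refine hH.notMem_union_of_card_edgeFinset_le hH' (by decide) two_lt_degree_two
      two_lt_degree_seven ?_
    rw [Finset.card_union_of_disjoint hdisj, hcard, card_edgeFinset]
  exact hH.card_le_card_of_cover (C := {1, 3, 6, 8}) fun e he =>
    exists_mem_cover_of_ne (hH.1 he) fun h => hmid (h ▸ Finset.mem_union_left H' he)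

theorem gBeta_eq : gBeta Spanner10 = 5 := by
  refine IsGreatest.csSup_eq ⟨⟨perfectMatching, isMatchingE_perfectMatching, rfl⟩, ?_⟩
  rintro _ ⟨M, hM, rfl⟩
  exact card_le_five_of_isMatchingE hM

theorem gLam_eq : gLam Spanner10 = 8 := by
  refine IsGreatest.csSup_eq ⟨⟨oddEdges, evenEdges, isMatchingE_oddEdges, isMatchingE_evenEdges,
    disjoint_oddEdges_evenEdges, rfl⟩, ?_⟩
  rintro _ ⟨H, H', hH, hH', hdisj, rfl⟩
  exact card_add_card_le_eight hH hH' hdisj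

theorem gAlpha_eq : gAlpha Spanner10 = 4 := by
  refine IsGreatest.csSup_eq ⟨⟨oddEdges, evenEdges, isMatchingE_oddEdges, isMatchingE_evenEdges,
    disjoint_oddEdges_evenEdges, gLam_eq.symm, rfl⟩, ?_⟩
  rintro _ ⟨H, H', hH, hH', hdisj, hcard, rfl⟩
  exact card_le_four_of_card_add_card_eq_eight hH hH' hdisj (hcard.trans gLam_eq)

end Spanner10

/-- for the spanner `S`: `β(S) = 5`, `λ(S) = 8`, and
`α(S) = λ(S) − α(S) = 4`; in particular `β(S)/α(S) = 5/4`. -/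
theorem stmt7 :
    gBeta Spanner10 = 5 ∧ gLam Spanner10 = 8 ∧ gAlpha Spanner10 = 4 ∧
    gLam Spanner10 - gAlpha Spanner10 = 4 ∧
    4 * gBeta Spanner10 = 5 * gAlpha Spanner10 := by
  rw [Spanner10.gBeta_eq, Spanner10.gLam_eq, Spanner10.gAlpha_eq]
  decide
end

section
/- Let S be the spanner and (H, H') ∈ M₂(S). Then every vertex of S of degree 2 and every vertex of degree 3 is covered both by H and by H'. -/
open SimpleGraph

/-!
The spanner has nine edges, and alternating along its two paths shows `λ ≥ 8`, so an optimal pair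
of disjoint matchings leaves at most one edge unused. Two matchings leave an edge unused at every
vertex of degree 3; both `a₃` and `b₃` have degree 3, so the only unused edge is `a₃b₃`. Removing
it leaves at least two used edges at every vertex of degree 2 or 3, and two used edges at a vertex
must belong to different matchings.
-/

section DisjointMatchings

variable {V : Type*} {G : SimpleGraph V} {M H H' : Finset (Sym2 V)} {u v w : V}

theorem ncard_incidenceSet (G : SimpleGraph V) (v : V) : (G.incidenceSet v).ncard = fdeg G v := by
  classical exact Nat.card_congr (G.incidenceSetEquivNeighborSet v)

/-- The edges of `G` belonging to neither member of a pair `(H, H')` of matchings. -/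
def unusedEdges (G : SimpleGraph V) (H H' : Finset (Sym2 V)) : Set (Sym2 V) :=
  G.edgeSet \ (↑H ∪ ↑H')

theorem unusedEdges_comm (G : SimpleGraph V) (H H' : Finset (Sym2 V)) :
    unusedEdges G H H' = unusedEdges G H' H := by
  rw [unusedEdges, unusedEdges, Set.union_comm]

namespace IsMatchingE

theorem subsingleton_incidenceSet_inter (hM : IsMatchingE G M) (v : V) :
    (G.incidenceSet v ∩ ↑M).Subsingleton := by
  rintro e ⟨⟨-, hve⟩, he⟩ f ⟨⟨-, hvf⟩, hf⟩
  by_contra hef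
  exact hM.2 e he f hf hef v ⟨hve, hvf⟩

theorem exists_mem_unusedEdges (hH : IsMatchingE G H) (hH' : IsMatchingE G H')
    (hv : 3 ≤ fdeg G v) : ∃ e ∈ unusedEdges G H H', v ∈ e := by
  by_contra! hused
  have hcover : G.incidenceSet v ⊆ G.incidenceSet v ∩ ↑H ∪ G.incidenceSet v ∩ ↑H' := by
    intro e he
    rw [← Set.inter_union_distrib_left]
    exact ⟨he, by_contra fun hnot => hused e ⟨he.1, hnot⟩ he.2⟩
  have hsH := hH.subsingleton_incidenceSet_inter v
  have hsH' := hH'.subsingleton_incidenceSet_inter v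
  have hcard : fdeg G v ≤ 1 + 1 := calc
    fdeg G v = (G.incidenceSet v).ncard := (ncard_incidenceSet G v).symm
    _ ≤ (G.incidenceSet v ∩ ↑H ∪ G.incidenceSet v ∩ ↑H').ncard :=
      Set.ncard_le_ncard hcover (hsH.finite.union hsH'.finite)
    _ ≤ (G.incidenceSet v ∩ ↑H).ncard + (G.incidenceSet v ∩ ↑H').ncard := Set.ncard_union_le _ _
    _ ≤ 1 + 1 := add_le_add (Set.ncard_le_one_iff_subsingleton.2 hsH)
      (Set.ncard_le_one_iff_subsingleton.2 hsH')
  omega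

theorem unusedEdges_eq_singleton (hH : IsMatchingE G H) (hH' : IsMatchingE G H')
    (hunused : (unusedEdges G H H').Subsingleton) (huw : u ≠ w) (hu : 3 ≤ fdeg G u)
    (hw : 3 ≤ fdeg G w) : unusedEdges G H H' = {s(u, w)} := by
  obtain ⟨e, he, hue⟩ := hH.exists_mem_unusedEdges hH' hu
  obtain ⟨f, hf, hwf⟩ := hH.exists_mem_unusedEdges hH' hw
  obtain rfl : e = f := hunused he hf
  obtain rfl : e = s(u, w) := (Sym2.mem_and_mem_iff huw).1 ⟨hue, hwf⟩
  exact hunused.eq_singleton_of_mem he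

theorem covers_right_of_nontrivial (hH : IsMatchingE G H)
    (hv : (G.incidenceSet v \ unusedEdges G H H').Nontrivial) : Covers H' v := by
  by_contra hcov
  have hused : G.incidenceSet v \ unusedEdges G H H' ⊆ G.incidenceSet v ∩ ↑H := by
    rintro e ⟨he, hused⟩
    have hmem : e ∈ (H : Set (Sym2 V)) ∪ ↑H' := by_contra fun hnot => hused ⟨he.1, hnot⟩
    exact ⟨he, hmem.resolve_right fun heH' => hcov ⟨e, heH', he.2⟩⟩
  exact Set.not_subsingleton_iff.2 (hv.mono hused) (hH.subsingleton_incidenceSet_inter v)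

theorem covers_and_covers_of_two_le_fdeg (hH : IsMatchingE G H) (hH' : IsMatchingE G H')
    (hunused : (unusedEdges G H H').Subsingleton) (huw : u ≠ w) (hu : 3 ≤ fdeg G u)
    (hw : 3 ≤ fdeg G w) (hv : 2 ≤ fdeg G v) : Covers H v ∧ Covers H' v := by
  have hused : (G.incidenceSet v \ unusedEdges G H H').Nontrivial := by
    rw [hH.unusedEdges_eq_singleton hH' hunused huw hu hw]
    refine (Set.one_lt_ncard_iff_nontrivial_and_finite.1 ?_).1
    by_cases hmem : v ∈ s(u, w)
    · have hv3 : 3 ≤ fdeg G v := by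
        rcases Sym2.mem_iff.1 hmem with rfl | rfl <;> assumption
      have hle := Set.pred_ncard_le_ncard_sdiff_singleton (G.incidenceSet v) s(u, w)
      rw [ncard_incidenceSet] at hle
      omega
    · rw [Set.sdiff_singleton_eq_self fun h => hmem h.2, ncard_incidenceSet]
      exact hv
  exact ⟨hH'.covers_right_of_nontrivial (unusedEdges_comm G H H' ▸ hused),
    hH.covers_right_of_nontrivial hused⟩

theorem ncard_unusedEdges_add_card_add_card [Finite G.edgeSet] (hH : IsMatchingE G H)
    (hH' : IsMatchingE G H') (hdisj : Disjoint H H') :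
    (unusedEdges G H H').ncard + (H.card + H'.card) = G.edgeSet.ncard := by
  rw [← Set.ncard_coe_finset H, ← Set.ncard_coe_finset H',
    ← Set.ncard_union_eq (Finset.disjoint_coe.2 hdisj)]
  exact Set.ncard_sdiff_add_ncard_of_subset (Set.union_subset hH.1 hH'.1)

theorem card_add_card_le_gLam_s8 [Finite G.edgeSet] (hH : IsMatchingE G H)
    (hH' : IsMatchingE G H') (hdisj : Disjoint H H') : H.card + H'.card ≤ gLam G := by
  refine le_csSup ⟨G.edgeSet.ncard, ?_⟩ ⟨H, H', hH, hH', hdisj, rfl⟩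
  rintro n ⟨K, K', hK, hK', hKdisj, rfl⟩
  have := hK.ncard_unusedEdges_add_card_add_card hK' hKdisj
  omega

end IsMatchingE

instance instDecidableIsMatchingE [Fintype V] [DecidableEq V] [DecidableRel G.Adj] :
    Decidable (IsMatchingE G M) :=
  decidable_of_iff ((∀ e ∈ M, e ∈ G.edgeSet) ∧
    ∀ e ∈ M, ∀ f ∈ M, e ≠ f → ∀ v : V, ¬(v ∈ e ∧ v ∈ f)) Iff.rfl

end DisjointMatchings

namespace Spanner10

instance instDecidableRelAdj : DecidableRel Spanner10.Adj := by
  unfold Spanner10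
  infer_instance

theorem ncard_edgeSet : Spanner10.edgeSet.ncard = 9 := by
  rw [Set.ncard_eq_toFinset_card']
  decide

theorem fdeg_a₃ : fdeg Spanner10 2 = 3 := by
  rw [fdeg, Set.ncard_eq_toFinset_card']
  decide

theorem fdeg_b₃ : fdeg Spanner10 7 = 3 := by
  rw [fdeg, Set.ncard_eq_toFinset_card']
  decide

set_option maxRecDepth 10000 in
theorem eight_le_gLam : 8 ≤ gLam Spanner10 := by
  have hH : IsMatchingE Spanner10 {s(0, 1), s(2, 3), s(5, 6), s(7, 8)} := by decide
  have hH' : IsMatchingE Spanner10 {s(1, 2), s(3, 4), s(6, 7), s(8, 9)} := by decide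
  exact hH.card_add_card_le_gLam_s8 hH' (by decide)

theorem subsingleton_unusedEdges {H H' : Finset (Sym2 (Fin 10))} (hH : IsMatchingE Spanner10 H)
    (hH' : IsMatchingE Spanner10 H') (hdisj : Disjoint H H')
    (hsum : H.card + H'.card = gLam Spanner10) : (unusedEdges Spanner10 H H').Subsingleton := by
  rw [← Set.ncard_le_one_iff_subsingleton]
  have hcount := hH.ncard_unusedEdges_add_card_add_card hH' hdisj
  rw [ncard_edgeSet, hsum] at hcount
  have := eight_le_gLam
  omega

end Spanner10

theorem stmt8_general {H H' : Finset (Sym2 (Fin 10))} (hH : IsMatchingE Spanner10 H)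
    (hH' : IsMatchingE Spanner10 H') (hdisj : Disjoint H H')
    (hsum : H.card + H'.card = gLam Spanner10) {v : Fin 10} (hv : 2 ≤ fdeg Spanner10 v) :
    Covers H v ∧ Covers H' v :=
  hH.covers_and_covers_of_two_le_fdeg hH'
    (Spanner10.subsingleton_unusedEdges hH hH' hdisj hsum) (by decide)
    Spanner10.fdeg_a₃.ge Spanner10.fdeg_b₃.ge hv

/-- for the spanner `S` and `(H, H') ∈ M₂(S)`, every vertex of degree 2 or 3
is covered both by `H` and by `H'`. -/
theorem stmt8 (H H' : Finset (Sym2 (Fin 10))) (h : InM2 Spanner10 H H')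
    (v : Fin 10) (hv : fdeg Spanner10 v = 2 ∨ fdeg Spanner10 v = 3) :
    Covers H v ∧ Covers H' v :=
  stmt8_general h.1 h.2.1 h.2.2.1 h.2.2.2.1 (by omega)
end
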